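/- If γ is non-oscillating at O and 𝓗 is the (nonzero, self-adjoint, operator-norm one) limit of Hs(f)(x)/‖Hs(f)(x)‖ as x → O along γ, then ν is an eigen-direction of 𝓗: there exists λ ∈ ℝ such that 𝓗·ν = λ·ν. -/

import Mathlib

open scoped RealInnerProductSpace Topology
open Filter

/-!
Write `X = ∇f`. If two distinct unit vectors `x`, `y` were cluster points of `X / |X|` along `γ`,
the function `⟨X, x - y⟩` would change sign infinitely often along `γ`; hence non-oscillation makes
the unit tangent converge, to a unit vector `w`. The rest is a directional l'Hôpital rule: if `h`
tends to `0`, if its derivative is a nonnegative multiple of a curve tending to `z`, and if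
nonnegative multiples of `h` tend to `w`, then `-w` and `z` are on the same ray. For `h = γ` it
gives `ν = -w`. For `h = X ∘ γ`, whose derivative is a nonnegative multiple of
`(DX / ‖DX‖) (X / |X|)`, it puts `𝓗 w` on the ray of `-w`.
-/

theorem eventually_ge_or_le_nhdsLT {α β : Type*} [ConditionallyCompleteLinearOrder α]
    [TopologicalSpace α] [OrderTopology α] [DenselyOrdered α] [NoMinOrder α] [LinearOrder β]
    [TopologicalSpace β] [OrderClosedTopology β] {L : α} {p : α → β} {c : β}
    (hcont : ∀ᶠ s in 𝓝[<] L, ContinuousAt p s)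
    (hp : (∀ᶠ s in 𝓝[<] L, p s = c) ∨ (∀ᶠ s in 𝓝[<] L, p s ≠ c)) :
    (∀ᶠ s in 𝓝[<] L, c ≤ p s) ∨ (∀ᶠ s in 𝓝[<] L, p s ≤ c) := by
  rcases hp with heq | hne
  · exact .inl (heq.mono fun s hs => hs.ge)
  obtain ⟨b, hb, hIoo⟩ := (nhdsLT_basis L).eventually_iff.1 (hcont.and hne)
  by_contra! ⟨hlt, hgt⟩
  have hmem : ∀ᶠ s in 𝓝[<] L, s ∈ Set.Ioo b L := Ioo_mem_nhdsLT hb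
  obtain ⟨x, hx, hxI⟩ := (hlt.and_eventually hmem).exists
  obtain ⟨y, hy, hyI⟩ := (hgt.and_eventually hmem).exists
  obtain ⟨z, hzI, hz⟩ := isPreconnected_Ioo.intermediate_value₂ hxI hyI
    (fun s hs => (hIoo hs).1.continuousWithinAt) continuousOn_const hx.le hy.le
  exact (hIoo hzI).2 hz

theorem eventually_le_nhdsLT_of_hasDerivAt_nonneg {L c : ℝ} {p p' : ℝ → ℝ}
    (hderiv : ∀ᶠ s in 𝓝[<] L, HasDerivAt p (p' s) s) (hp' : ∀ᶠ s in 𝓝[<] L, 0 ≤ p' s)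
    (hlim : Tendsto p (𝓝[<] L) (𝓝 c)) : ∀ᶠ s in 𝓝[<] L, p s ≤ c := by
  obtain ⟨b, hb, hIoo⟩ := (nhdsLT_basis L).eventually_iff.1 (hderiv.and hp')
  have hmono : MonotoneOn p (Set.Ioo b L) := by
    refine monotoneOn_of_hasDerivWithinAt_nonneg (f' := p') (convex_Ioo b L)
      (fun s hs => (hIoo hs).1.continuousAt.continuousWithinAt) ?_ ?_
    all_goals rw [interior_Ioo]
    · exact fun s hs => (hIoo hs).1.hasDerivWithinAt
    · exact fun s hs => (hIoo hs).2
  filter_upwards [Ioo_mem_nhdsLT hb] with s hs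
  refine ge_of_tendsto hlim ?_
  filter_upwards [Ioo_mem_nhdsLT hs.2] with t ht
  exact hmono hs ⟨hs.1.trans ht.1, ht.2⟩ ht.1.le

theorem analyticAt_gradient {F : Type*} [NormedAddCommGroup F] [InnerProductSpace ℝ F]
    [CompleteSpace F] {f : F → ℝ} {x : F} (hf : AnalyticAt ℝ f x) :
    AnalyticAt ℝ (gradient f) x :=
  ((InnerProductSpace.toDual ℝ F).symm.toContinuousLinearEquiv.analyticAt _).fun_comp hf.fderiv

section Directions

variable {E : Type*} [NormedAddCommGroup E] [InnerProductSpace ℝ E]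

theorem sameRay_of_forall_inner_nonneg {x z : E} (h : ∀ v, 0 < ⟪z, v⟫ → 0 ≤ ⟪x, v⟫) :
    SameRay ℝ x z := by
  rcases eq_or_ne x 0 with rfl | hx
  · exact .zero_left z
  rcases eq_or_ne z 0 with rfl | hz
  · exact .zero_right x
  by_contra hray
  have hlt : ⟪x, z⟫ < ‖x‖ * ‖z‖ := inner_lt_norm_mul_iff_real.2 fun heq =>
    hray (sameRay_iff_norm_smul_eq.2 heq.symm)
  have hzv : ⟪z, ‖x‖ • z - ‖z‖ • x⟫ = ‖z‖ * (‖x‖ * ‖z‖ - ⟪x, z⟫) := by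
    rw [inner_sub_right, inner_smul_right, inner_smul_right, real_inner_self_eq_norm_sq,
      real_inner_comm]
    ring
  have hxv : ⟪x, ‖x‖ • z - ‖z‖ • x⟫ = -(‖x‖ * (‖x‖ * ‖z‖ - ⟪x, z⟫)) := by
    rw [inner_sub_right, inner_smul_right, inner_smul_right, real_inner_self_eq_norm_sq]
    ring
  have hgap : 0 < ‖x‖ * ‖z‖ - ⟪x, z⟫ := sub_pos.2 hlt
  have hnonneg := h _ (hzv ▸ mul_pos (norm_pos_iff.2 hz) hgap)
  rw [hxv] at hnonneg
  linarith [mul_pos (norm_pos_iff.2 hx) hgap]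

theorem sameRay_neg_of_tendsto_smul_of_hasDerivAt_smul {L : ℝ} {h b : ℝ → E} {ρ σ : ℝ → ℝ}
    {w z : E} (hderiv : ∀ᶠ s in 𝓝[<] L, HasDerivAt h (ρ s • b s) s)
    (hρ : ∀ᶠ s in 𝓝[<] L, 0 ≤ ρ s) (hσ : ∀ᶠ s in 𝓝[<] L, 0 ≤ σ s)
    (hzero : Tendsto h (𝓝[<] L) (𝓝 0)) (hb : Tendsto b (𝓝[<] L) (𝓝 z))
    (hw : Tendsto (fun s => σ s • h s) (𝓝[<] L) (𝓝 w)) : SameRay ℝ (-w) z := by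
  refine sameRay_of_forall_inner_nonneg fun v hzv => ?_
  have hinner_deriv : ∀ᶠ s in 𝓝[<] L, HasDerivAt (fun t => ⟪h t, v⟫) (ρ s * ⟪b s, v⟫) s := by
    filter_upwards [hderiv] with s hs
    simpa [real_inner_smul_left] using hs.inner ℝ (hasDerivAt_const s v)
  have hderiv_nonneg : ∀ᶠ s in 𝓝[<] L, 0 ≤ ρ s * ⟪b s, v⟫ := by
    filter_upwards [hρ, (hb.inner tendsto_const_nhds).eventually_const_lt hzv] with s hρs hbs
    exact mul_nonneg hρs hbs.le
  have hinner_zero : Tendsto (fun s => ⟪h s, v⟫) (𝓝[<] L) (𝓝 0) := by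
    simpa using hzero.inner (tendsto_const_nhds (x := v))
  have hwv : ⟪w, v⟫ ≤ 0 := by
    refine le_of_tendsto (hw.inner tendsto_const_nhds) ?_
    filter_upwards [hσ, eventually_le_nhdsLT_of_hasDerivAt_nonneg hinner_deriv hderiv_nonneg
      hinner_zero] with s hσs hs
    rw [real_inner_smul_left]
    exact mul_nonpos_of_nonneg_of_nonpos hσs hs
  simpa [inner_neg_left] using hwv

theorem exists_tendsto_direction_of_forall_inner_sign [FiniteDimensional ℝ E] {ι : Type*}
    {l : Filter ι} [NeBot l] {h : ι → E} (hne : ∀ᶠ s in l, h s ≠ 0)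
    (hsign : ∀ v, (∀ᶠ s in l, 0 ≤ ⟪h s, v⟫) ∨ (∀ᶠ s in l, ⟪h s, v⟫ ≤ 0)) :
    ∃ w, ‖w‖ = 1 ∧ Tendsto (fun s => ‖h s‖⁻¹ • h s) l (𝓝 w) := by
  have hsphere : ∀ᶠ s in l, ‖h s‖⁻¹ • h s ∈ Metric.sphere (0 : E) 1 :=
    hne.mono fun s hs => mem_sphere_zero_iff_norm.2 (norm_smul_inv_norm (𝕜 := ℝ) hs)
  obtain ⟨w, hw, hwl⟩ := (isCompact_sphere (0 : E) 1).exists_mapClusterPt_of_frequently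
    hsphere.frequently
  refine ⟨w, mem_sphere_zero_iff_norm.1 hw,
    (isCompact_sphere (0 : E) 1).tendsto_nhds_of_unique_mapClusterPt hsphere fun x hx hxl => ?_⟩
  rw [mem_sphere_zero_iff_norm] at hw hx
  by_contra hxw
  have hfreq : ∀ {y v : E}, MapClusterPt y l (fun s => ‖h s‖⁻¹ • h s) → 0 < ⟪y, v⟫ →
      ∃ᶠ s in l, 0 < ⟪h s, v⟫ := by
    intro y v hy hyv
    have hnear : ∀ᶠ a in 𝓝 y, 0 < ⟪a, v⟫ :=
      (continuous_id.inner continuous_const).continuousAt.eventually_const_lt hyv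
    refine (hy.frequently hnear).mono fun s hs => ?_
    rw [real_inner_smul_left] at hs
    exact pos_of_mul_pos_right hs (inv_nonneg.2 (norm_nonneg _))
  have hlt : ⟪x, w⟫ < 1 := (inner_lt_one_iff_real_of_norm_eq_one hx hw).2 hxw
  have hxpos : 0 < ⟪x, x - w⟫ := by simpa [inner_sub_right, hx] using hlt
  have hwpos : 0 < ⟪w, w - x⟫ := by simpa [inner_sub_right, hw, real_inner_comm] using hlt
  rcases hsign (x - w) with hnonneg | hnonpos
  · obtain ⟨s, hs, hs'⟩ := ((hfreq hwl hwpos).and_eventually hnonneg).exists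
    rw [← neg_sub, inner_neg_right] at hs
    linarith
  · obtain ⟨s, hs, hs'⟩ := ((hfreq hxl hxpos).and_eventually hnonpos).exists
    exact hs.not_ge hs'

theorem sameRay_neg_apply_of_hasDerivAt_apply_direction {L : ℝ} {h : ℝ → E} {A : ℝ → E →L[ℝ] E}
    {H : E →L[ℝ] E} {w : E} (hderiv : ∀ᶠ s in 𝓝[<] L, HasDerivAt h (A s (‖h s‖⁻¹ • h s)) s)
    (hzero : Tendsto h (𝓝[<] L) (𝓝 0)) (hw : Tendsto (fun s => ‖h s‖⁻¹ • h s) (𝓝[<] L) (𝓝 w))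
    (hH : Tendsto (fun s => ‖A s‖⁻¹ • A s) (𝓝[<] L) (𝓝 H)) : SameRay ℝ (-w) (H w) := by
  have hHw : Tendsto (fun s => (‖A s‖⁻¹ • A s) (‖h s‖⁻¹ • h s)) (𝓝[<] L) (𝓝 (H w)) :=
    (isBoundedBilinearMap_apply.continuous.tendsto (H, w)).comp (hH.prodMk_nhds hw)
  refine sameRay_neg_of_tendsto_smul_of_hasDerivAt_smul (hderiv.mono fun s hs => ?_)
    (.of_forall fun s => norm_nonneg (A s)) (.of_forall fun s => inv_nonneg.2 (norm_nonneg (h s)))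
    hzero hHw hw
  have hA : ‖A s‖ • ‖A s‖⁻¹ • A s = A s := NormedSpace.norm_smul_normalize (A s)
  rwa [← smul_apply, hA]

theorem limit_of_secants_is_eigenvector_of_limit_hessian_direction_general [FiniteDimensional ℝ E]
    {X : E → E} (hX : ∀ᶠ x in 𝓝 0, DifferentiableAt ℝ X x) (hX0 : X 0 = 0) {L : ℝ} {γ : ℝ → E}
    (hreg : ∀ᶠ s in 𝓝[<] L, X (γ s) ≠ 0)
    (hode : ∀ᶠ s in 𝓝[<] L, HasDerivAt γ (‖X (γ s)‖⁻¹ • X (γ s)) s)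
    (hγ : Tendsto γ (𝓝[<] L) (𝓝 0))
    (hosc : ∀ v, (∀ᶠ s in 𝓝[<] L, ⟪X (γ s), v⟫ = 0) ∨ (∀ᶠ s in 𝓝[<] L, ⟪X (γ s), v⟫ ≠ 0))
    {ν : E} (hν1 : ‖ν‖ = 1) (hν : Tendsto (fun s => ‖γ s‖⁻¹ • γ s) (𝓝[<] L) (𝓝 ν))
    {H : E →L[ℝ] E}
    (hH : Tendsto (fun s => ‖fderiv ℝ X (γ s)‖⁻¹ • fderiv ℝ X (γ s)) (𝓝[<] L) (𝓝 H)) :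
    H ν = -‖H ν‖ • ν := by
  have hderiv : ∀ᶠ s in 𝓝[<] L,
      HasDerivAt (fun t => X (γ t)) (fderiv ℝ X (γ s) (‖X (γ s)‖⁻¹ • X (γ s))) s := by
    filter_upwards [hode, hγ.eventually hX] with s hs hXs
    exact hXs.hasFDerivAt.comp_hasDerivAt s hs
  obtain ⟨w, hw1, hw⟩ := exists_tendsto_direction_of_forall_inner_sign hreg fun v =>
    eventually_ge_or_le_nhdsLT
      (hderiv.mono fun s hs => hs.continuousAt.inner continuousAt_const) (hosc v)
  have hνw : -ν = w := by
    have hray : SameRay ℝ (-ν) w :=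
      sameRay_neg_of_tendsto_smul_of_hasDerivAt_smul (ρ := fun _ => 1) (by simpa using hode)
        (.of_forall fun _ => zero_le_one) (.of_forall fun _ => inv_nonneg.2 (norm_nonneg _))
        hγ hw hν
    exact hray.eq_of_norm_eq (by rw [norm_neg, hν1, hw1])
  have hfield : Tendsto (fun s => X (γ s)) (𝓝[<] L) (𝓝 0) :=
    (hX0 ▸ hX.self_of_nhds.continuousAt.tendsto).comp hγ
  have hray : SameRay ℝ (-w) (H w) :=
    sameRay_neg_apply_of_hasDerivAt_apply_direction hderiv hfield hw hH
  have heigen : -(H ν) = ‖H ν‖ • ν := by simpa [← hνw, hν1] using hray.norm_smul_eq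
  rw [neg_smul, ← heigen, neg_neg]

end Directions

/-- the limit of secants `ν` is an eigen-direction of the limit `𝓗` of the
normalized Hessian along a non-oscillating trajectory. -/
theorem limit_of_secants_is_eigenvector_of_limit_hessian_direction
    {n : ℕ} (hn : 2 ≤ n)
    (U : Set (EuclideanSpace ℝ (Fin n))) (hUopen : IsOpen U)
    (hOU : (0 : EuclideanSpace ℝ (Fin n)) ∈ U)
    (f : EuclideanSpace ℝ (Fin n) → ℝ)
    (hfan : AnalyticOnNhd ℝ f U) (hf0 : f 0 = 0) (hgf0 : gradient f 0 = 0)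
    (L : ℝ) (hL : 0 < L)
    (γ : ℝ → EuclideanSpace ℝ (Fin n))
    (hγU : ∀ s ∈ Set.Ico (0 : ℝ) L, γ s ∈ U)
    (hγreg : ∀ s ∈ Set.Ico (0 : ℝ) L, gradient f (γ s) ≠ 0)
    (hγode : ∀ s ∈ Set.Ico (0 : ℝ) L,
      HasDerivAt γ (‖gradient f (γ s)‖⁻¹ • gradient f (γ s)) s)
    (hfneg : f (γ 0) < 0)
    (hfmono : StrictMonoOn (fun s => f (γ s)) (Set.Ico (0 : ℝ) L))
    (hγlim : Tendsto γ (𝓝[<] L) (𝓝 0))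
    (hosc : ∀ g : EuclideanSpace ℝ (Fin n) → ℝ, AnalyticAt ℝ g 0 →
      (∀ᶠ s in 𝓝[<] L, g (γ s) = 0) ∨ (∀ᶠ s in 𝓝[<] L, g (γ s) ≠ 0))
    (ν : EuclideanSpace ℝ (Fin n)) (hν1 : ‖ν‖ = 1)
    (hνlim : Tendsto (fun s => ‖γ s‖⁻¹ • γ s) (𝓝[<] L) (𝓝 ν))
    (H : EuclideanSpace ℝ (Fin n) →L[ℝ] EuclideanSpace ℝ (Fin n))
    (Hsym : ∀ u v : EuclideanSpace ℝ (Fin n), ⟪H u, v⟫ = ⟪u, H v⟫)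
    (Hnorm : ‖H‖ = 1) (Hne : H ≠ 0)
    (hHlim : Tendsto (fun s => ‖fderiv ℝ (gradient f) (γ s)‖⁻¹ • fderiv ℝ (gradient f) (γ s))
      (𝓝[<] L) (𝓝 H)) :
    ∃ lam : ℝ, H ν = lam • ν := by
  have hgrad : AnalyticAt ℝ (gradient f) 0 := analyticAt_gradient (hfan 0 hOU)
  have hmem : ∀ᶠ s in 𝓝[<] L, s ∈ Set.Ico 0 L := Ico_mem_nhdsLT hL
  exact ⟨-‖H ν‖, limit_of_secants_is_eigenvector_of_limit_hessian_direction_general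
    (hgrad.eventually_analyticAt.mono fun x hx => hx.differentiableAt) hgf0
    (hmem.mono hγreg) (hmem.mono hγode) hγlim
    (fun v => hosc _ ((((innerSL ℝ).flip v).analyticAt _).fun_comp hgrad)) hν1 hνlim hHlim⟩
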